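/- Let k ≥ 2, g ∈ C(J) on an interval J of length |J| with 2ρ ≥ |J| ≥ ρ > 0, and suppose ω_k(g, t; J) ≤ A·ω(t) for all 0 < t ≤ 2ρ, where ω is nondecreasing with t^(−k)·ω(t) nonincreasing, and ‖g‖_J ≤ A·ω(ρ). Then for all 0 < t ≤ ρ and all η ∈ [t, ρ], ω₁(g, t; J) ≤ c(k)·A·ω(η)·(1 + t·ρ^(k−1)·η^(−k)). In particular, choosing η = t^(1/k)·ρ^(1−1/k) gives ω₁(g, t; J) ≤ c(k)·A·ω(t^(1/k)·ρ^(1−1/k)). -/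

import Mathlib

open Set

/-- The `k`-th modulus of smoothness of `f` on `[a,b]`. -/
noncomputable def wmod (k : ℕ) (f : ℝ → ℝ) (t a b : ℝ) : ℝ :=
  sSup {v : ℝ | ∃ u x : ℝ, 0 < u ∧ u ≤ t ∧ a ≤ x - k * u / 2 ∧ x + k * u / 2 ≤ b ∧
    v = |∑ i ∈ Finset.range (k + 1),
          (-1 : ℝ) ^ i * (k.choose i : ℝ) * f (x + ((k : ℝ) / 2 - i) * u)|}

/-- The sum of the values of `φ` at a point and at its translate by `h`. -/
def shiftSum (h : ℝ) (φ : ℝ → ℝ) (y : ℝ) : ℝ := φ y + φ (y + h)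

theorem fwdDiff_two_mul_iterate (h : ℝ) (f : ℝ → ℝ) (j : ℕ) :
    (fwdDiff (2 * h))^[j] f = (shiftSum h)^[j] ((fwdDiff h)^[j] f) := by
  have hcomp : fwdDiff (G := ℝ) (2 * h) = shiftSum h ∘ fwdDiff h := by
    funext φ y
    simp only [fwdDiff, shiftSum, Function.comp_apply]
    rw [show y + 2 * h = y + h + h by ring]
    ring
  have hcomm : Function.Commute (shiftSum h) (fwdDiff (G := ℝ) h) := by
    intro φ
    funext y
    simp only [fwdDiff, shiftSum]
    ring
  rw [hcomp, hcomm.comp_iterate, Function.comp_apply]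

theorem abs_shiftSum_iterate_sub_le {h c V : ℝ} (j : ℕ) (φ : ℝ → ℝ) (y : ℝ)
    (hφ : ∀ i : ℕ, i ≤ j → |φ (y + i * h) - c| ≤ V) :
    |(shiftSum h)^[j] φ y - 2 ^ j * c| ≤ 2 ^ j * V := by
  induction j generalizing y with
  | zero => simpa using hφ 0 le_rfl
  | succ j ih =>
    rw [Function.iterate_succ_apply']
    have hleft := ih y fun i hi => hφ i (by omega)
    have hright := ih (y + h) fun i hi => by
      have := hφ (i + 1) (by omega)
      push_cast at this
      rwa [show y + h + i * h = y + (i + 1) * h by ring]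
    rw [abs_le] at *
    simp only [shiftSum, pow_succ]
    constructor <;> linarith [hleft.1, hleft.2, hright.1, hright.2]

theorem abs_fwdDiff_iterate_le {h N : ℝ} (j : ℕ) (f : ℝ → ℝ) (y : ℝ)
    (hf : ∀ i : ℕ, i ≤ j → |f (y + i * h)| ≤ N) :
    |(fwdDiff h)^[j] f y| ≤ 2 ^ j * N := by
  induction j generalizing y with
  | zero => simpa using hf 0 le_rfl
  | succ j ih =>
    rw [Function.iterate_succ_apply']
    have hleft := ih y fun i hi => hf i (by omega)
    have hright := ih (y + h) fun i hi => by
      have := hf (i + 1) (by omega)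
      push_cast at this
      rwa [show y + h + i * h = y + (i + 1) * h by ring]
    rw [abs_le] at *
    simp only [fwdDiff, pow_succ]
    constructor <;> linarith [hleft.1, hleft.2, hright.1, hright.2]

theorem abs_sub_le_of_abs_fwdDiff_le {h B : ℝ} (φ : ℝ → ℝ) (y : ℝ) {j : ℕ}
    (hφ : ∀ l : ℕ, l < j → |fwdDiff h φ (y + l * h)| ≤ B) {m i : ℕ} (hmi : m ≤ i) (hij : i ≤ j) :
    |φ (y + i * h) - φ (y + m * h)| ≤ (i - m : ℝ) * B := by
  induction i, hmi using Nat.le_induction with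
  | base => simp
  | succ i hmi ih =>
    have hprev := ih (by omega)
    have hstep := hφ i (by omega)
    rw [fwdDiff, show y + i * h + h = y + (i + 1) * h by ring] at hstep
    push_cast
    rw [abs_le] at *
    constructor <;> linarith [hprev.1, hprev.2, hstep.1, hstep.2]

/-- Comparison of the `j`-th differences with steps `h` and `2h`. -/
theorem two_pow_mul_abs_fwdDiff_iterate_le {h B : ℝ} (f : ℝ → ℝ) (y : ℝ) {j m : ℕ} (hm : m ≤ j)
    (hB : 0 ≤ B) (hf : ∀ l : ℕ, l < j → |(fwdDiff h)^[j + 1] f (y + l * h)| ≤ B) :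
    2 ^ j * |(fwdDiff h)^[j] f (y + m * h)| ≤ |(fwdDiff (2 * h))^[j] f y| + 2 ^ j * (j * B) := by
  simp only [Function.iterate_succ_apply'] at hf
  have hle : ∀ p q : ℕ, q ≤ j → (q - p : ℝ) * B ≤ j * B := fun p q hq => by
    have : (q : ℝ) ≤ j := by exact_mod_cast hq
    have : (0 : ℝ) ≤ p := p.cast_nonneg
    gcongr
    linarith
  have hnear := abs_shiftSum_iterate_sub_le (h := h) (c := (fwdDiff h)^[j] f (y + m * h))
    (V := j * B) j ((fwdDiff h)^[j] f) y fun i hi => by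
      rcases le_total m i with hmi | him
      · exact (abs_sub_le_of_abs_fwdDiff_le _ y hf hmi hi).trans (hle m i hi)
      · rw [abs_sub_comm]
        exact (abs_sub_le_of_abs_fwdDiff_le _ y hf him hm).trans (hle i m hm)
  rw [fwdDiff_two_mul_iterate]
  have htri := abs_sub_abs_le_abs_sub (2 ^ j * (fwdDiff h)^[j] f (y + m * h))
    ((shiftSum h)^[j] ((fwdDiff h)^[j] f) y)
  rw [abs_sub_comm, abs_mul, abs_of_pos (by positivity : (0 : ℝ) < 2 ^ j)] at htri
  linarith

/-- A Marchaud-type step: a bound on the differences of order `j + 1` yields one on order `j`. -/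
theorem abs_fwdDiff_iterate_le_of_succ {a b ρ M N : ℝ} {f : ℝ → ℝ} {j : ℕ} (hj : 1 ≤ j)
    (hρ : 0 < ρ) (hρab : ρ ≤ b - a) (hab : b - a ≤ 2 * ρ) (hM : 0 ≤ M) (hN : 0 ≤ N)
    (hf : ∀ x ∈ Icc a b, |f x| ≤ N)
    (hsucc : ∀ h x : ℝ, 0 < h → a ≤ x → x + (j + 1 : ℕ) * h ≤ b →
      |(fwdDiff h)^[j + 1] f x| ≤ M + N * (h / ρ) ^ (j + 1))
    {h x : ℝ} (hh : 0 < h) (hax : a ≤ x) (hxb : x + j * h ≤ b) :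
    |(fwdDiff h)^[j] f x| ≤ ((6 * j) ^ j + 2 * j) * (M + N * (h / ρ) ^ j) := by
  have hj' : (1 : ℝ) ≤ j := by exact_mod_cast hj
  have hlarge : ∀ h x : ℝ, 0 < h → a ≤ x → x + j * h ≤ b → ρ ≤ 3 * j * h →
      |(fwdDiff h)^[j] f x| ≤ 2 * j * M
        + N * (((6 * j) ^ j + 2 * j) * (h / ρ) ^ j - j * (h / ρ) ^ (j + 1)) := by
    intro h x hh hax hxb hbig
    have hbound := abs_fwdDiff_iterate_le (h := h) (N := N) j f x fun i hi => hf _ ⟨by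
      nlinarith [mul_nonneg i.cast_nonneg hh.le], by
      have : (i : ℝ) ≤ j := by exact_mod_cast hi
      nlinarith⟩
    have hs2 : h / ρ ≤ 2 := by
      rw [div_le_iff₀ hρ]
      nlinarith
    have hs0 : 0 < h / ρ := by positivity
    have hs1 : 1 ≤ 3 * j * (h / ρ) := by
      rw [← mul_div_assoc, one_le_div hρ]
      exact hbig
    have hpow : (2 : ℝ) ^ j ≤ (6 * j) ^ j * (h / ρ) ^ j := by
      rw [← mul_pow]
      gcongr
      linarith
    have htail : j * (h / ρ) ^ (j + 1) ≤ 2 * j * (h / ρ) ^ j := by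
      rw [pow_succ]
      have : 0 ≤ j * (h / ρ) ^ j := by positivity
      nlinarith
    calc _ ≤ 2 ^ j * N := hbound
      _ ≤ N * (((6 * j) ^ j + 2 * j) * (h / ρ) ^ j - j * (h / ρ) ^ (j + 1)) := by
        rw [mul_comm]
        gcongr
        linarith
      _ ≤ _ := le_add_of_nonneg_left (by positivity)
  have hall : ∀ (n : ℕ) (h x : ℝ), 0 < h → a ≤ x → x + j * h ≤ b → ρ ≤ 3 * j * h * 2 ^ n →
      |(fwdDiff h)^[j] f x| ≤ 2 * j * M
        + N * (((6 * j) ^ j + 2 * j) * (h / ρ) ^ j - j * (h / ρ) ^ (j + 1)) := by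
    intro n
    induction n with
    | zero => simpa using hlarge
    | succ n ih =>
      intro h x hh hax hxb hn
      rcases le_or_gt ρ (3 * j * h) with hbig | hsmall
      · exact hlarge h x hh hax hxb hbig
      obtain ⟨y, m, hm, hay, hyb, rfl⟩ : ∃ (y : ℝ) (m : ℕ), m ≤ j ∧ a ≤ y ∧
          y + j * (2 * h) ≤ b ∧ x = y + m * h := by
        rcases le_or_gt (x + j * (2 * h)) b with hright | hleft
        · exact ⟨x, 0, by omega, hax, hright, by simp⟩
        · exact ⟨x - j * h, j, le_rfl, by linarith, by linarith, by ring⟩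
      have hdouble := ih (2 * h) y (by positivity) hay hyb (by rw [pow_succ] at hn; linarith)
      have hcompare := two_pow_mul_abs_fwdDiff_iterate_le (h := h)
        (B := M + N * (h / ρ) ^ (j + 1)) f y hm (by positivity) fun l hl => by
          have hl' : (l : ℝ) + 1 ≤ j := by exact_mod_cast hl
          have hl0 : (0 : ℝ) ≤ l := l.cast_nonneg
          refine hsucc h _ hh (by nlinarith) ?_
          push_cast
          nlinarith
      have h2j : (2 : ℝ) ≤ 2 ^ j := by
        simpa using pow_le_pow_right₀ (one_le_two : (1 : ℝ) ≤ 2) hj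
      rw [mul_div_assoc, mul_pow 2, mul_pow 2, pow_succ (2 : ℝ)] at hdouble
      refine le_of_mul_le_mul_left (a := (2 : ℝ) ^ j) ?_ (by positivity)
      have hMj : 0 ≤ (2 ^ j - 2) * (j * M) := mul_nonneg (by linarith) (by positivity)
      calc _ ≤ _ := hcompare
        _ ≤ _ := add_le_add_left hdouble _
        _ ≤ _ := by linear_combination hMj
  obtain ⟨n, hn⟩ := pow_unbounded_of_one_lt (ρ / (3 * j * h)) (one_lt_two (α := ℝ))
  rw [div_lt_iff₀ (by positivity)] at hn
  refine (hall n h x hh hax hxb (by linarith)).trans ?_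
  have : 0 ≤ (6 * j : ℝ) ^ j * M := by positivity
  have : 0 ≤ N * (j * (h / ρ) ^ (j + 1)) := by positivity
  linarith

theorem exists_abs_fwdDiff_iterate_le (i j : ℕ) (hj : 1 ≤ j) :
    ∃ C : ℝ, 1 ≤ C ∧ ∀ (a b ρ M N : ℝ) (f : ℝ → ℝ), 0 < ρ → ρ ≤ b - a → b - a ≤ 2 * ρ →
      0 ≤ M → 0 ≤ N → (∀ x ∈ Icc a b, |f x| ≤ N) →
      (∀ h x : ℝ, 0 < h → a ≤ x → x + (j + i : ℕ) * h ≤ b →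
        |(fwdDiff h)^[j + i] f x| ≤ M + N * (h / ρ) ^ (j + i)) →
      ∀ h x : ℝ, 0 < h → a ≤ x → x + j * h ≤ b →
        |(fwdDiff h)^[j] f x| ≤ C * (M + N * (h / ρ) ^ j) := by
  induction i generalizing j with
  | zero => exact ⟨1, le_rfl, fun a b ρ M N f _ _ _ _ _ _ hf => by simpa using hf⟩
  | succ i ih =>
    obtain ⟨C, hC, hrec⟩ := ih (j + 1) (by omega)
    have hj' : (1 : ℝ) ≤ j := by exact_mod_cast hj
    have hfactor : 1 ≤ (6 * j : ℝ) ^ j + 2 * j := by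
      have : (0 : ℝ) ≤ (6 * j) ^ j := by positivity
      linarith
    refine ⟨((6 * j) ^ j + 2 * j) * C, one_le_mul_of_one_le_of_one_le hfactor hC, ?_⟩
    intro a b ρ M N f hρ hρab hab hM hN hf hdiff h x hh hax hxb
    have hC0 : 0 ≤ C := by linarith
    rw [show j + (i + 1) = j + 1 + i by ring] at hdiff
    have := abs_fwdDiff_iterate_le_of_succ (M := C * M) (N := C * N) hj hρ hρab hab
      (by positivity) (by positivity)
      (fun x hx => (hf x hx).trans (le_mul_of_one_le_left hN hC))
      (fun h x hh hax hxb => (hrec a b ρ M N f hρ hρab hab hM hN hf hdiff h x hh hax hxb).trans_eq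
        (by ring)) hh hax hxb
    exact this.trans_eq (by ring)

theorem sum_centered_eq_fwdDiff_iterate (k : ℕ) (f : ℝ → ℝ) (u x : ℝ) :
    ∑ i ∈ Finset.range (k + 1), (-1 : ℝ) ^ i * (k.choose i : ℝ) * f (x + ((k : ℝ) / 2 - i) * u)
      = (fwdDiff u)^[k] f (x - k * u / 2) := by
  rw [fwdDiff_iter_eq_sum_shift, ← Finset.sum_range_reflect]
  refine Finset.sum_congr rfl fun i hi => ?_
  have hik : i ≤ k := by simpa [Nat.lt_succ_iff] using hi
  rw [show k + 1 - 1 - i = k - i by omega, Nat.choose_symm hik, Nat.cast_sub hik]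
  simp only [zsmul_eq_mul, nsmul_eq_mul]
  push_cast
  congr 2
  ring

theorem abs_fwdDiff_iterate_le_wmod {k : ℕ} {f : ℝ → ℝ} {a b N h x : ℝ}
    (hf : ∀ x ∈ Icc a b, |f x| ≤ N) (hh : 0 < h) (hax : a ≤ x) (hxb : x + k * h ≤ b) :
    |(fwdDiff h)^[k] f x| ≤ wmod k f h a b := by
  refine le_csSup ⟨2 ^ k * N, ?_⟩ ⟨h, x + k * h / 2, hh, le_rfl, by linarith, by linarith, ?_⟩
  · rintro v ⟨u, y, hu, -, hay, hyb, rfl⟩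
    rw [sum_centered_eq_fwdDiff_iterate]
    refine abs_fwdDiff_iterate_le k f _ fun i hi => hf _ ⟨?_, ?_⟩
    · have : 0 ≤ (i : ℝ) * u := by positivity
      linarith
    · have : (i : ℝ) ≤ k := by exact_mod_cast hi
      nlinarith
  · rw [sum_centered_eq_fwdDiff_iterate, add_sub_cancel_right]

theorem wmod_le {k : ℕ} {f : ℝ → ℝ} {a b t B : ℝ} (hB : 0 ≤ B)
    (hf : ∀ h x : ℝ, 0 < h → h ≤ t → a ≤ x → x + k * h ≤ b → |(fwdDiff h)^[k] f x| ≤ B) :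
    wmod k f t a b ≤ B := by
  refine Real.sSup_le ?_ hB
  rintro v ⟨u, x, hu, hut, hax, hxb, rfl⟩
  rw [sum_centered_eq_fwdDiff_iterate]
  exact hf u _ hu hut hax (by linarith)

/-- the Marchaud-type estimate. If `|J| = b−a` with `ρ ≤ b−a ≤ 2ρ`,
`ω_k(g,t;J) ≤ A·ω(t)` for `0 < t ≤ 2ρ` where `ω` is nondecreasing with
`t^(−k)·ω(t)` nonincreasing, and `‖g‖_J ≤ A·ω(ρ)`, then
`ω₁(g,t;J) ≤ c(k)·A·ω(η)·(1 + t·ρ^(k−1)·η^(−k))` for `0 < t ≤ η ≤ ρ`; in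
particular `ω₁(g,t;J) ≤ c(k)·A·ω(t^(1/k)·ρ^(1−1/k))`. -/
theorem stmt10 (k : ℕ) (hk : 2 ≤ k) :
    ∃ c : ℝ, 0 < c ∧ ∀ (a b ρ A : ℝ) (g ω : ℝ → ℝ),
      0 < ρ → ρ ≤ b - a → b - a ≤ 2 * ρ →
      ContinuousOn g (Icc a b) →
      (∀ t : ℝ, 0 < t → 0 < ω t) →
      (∀ t₁ t₂ : ℝ, 0 < t₁ → t₁ ≤ t₂ → ω t₁ ≤ ω t₂) →
      (∀ t₁ t₂ : ℝ, 0 < t₁ → t₁ ≤ t₂ → ω t₂ / t₂ ^ k ≤ ω t₁ / t₁ ^ k) →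
      (∀ t : ℝ, 0 < t → t ≤ 2 * ρ → wmod k g t a b ≤ A * ω t) →
      (∀ x ∈ Icc a b, |g x| ≤ A * ω ρ) →
      (∀ t η : ℝ, 0 < t → t ≤ η → η ≤ ρ →
        wmod 1 g t a b ≤ c * A * ω η * (1 + t * ρ ^ (k - 1) / η ^ k)) ∧
      (∀ t : ℝ, 0 < t → t ≤ ρ →
        wmod 1 g t a b ≤
          c * A * ω (t ^ ((1 : ℝ) / k) * ρ ^ (1 - (1 : ℝ) / k))) := by
  obtain ⟨C, hC, hmarchaud⟩ := exists_abs_fwdDiff_iterate_le (k - 1) 1 le_rfl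
  rw [show 1 + (k - 1) = k by omega] at hmarchaud
  refine ⟨2 * C, by linarith, ?_⟩
  intro a b ρ A g ω hρ hρab hab _ hωpos hωmono hωdiv hsmooth hg
  have hA : 0 ≤ A := nonneg_of_mul_nonneg_left
    ((abs_nonneg _).trans (hg a ⟨le_rfl, by linarith⟩)) (hωpos ρ hρ)
  have hk' : (2 : ℝ) ≤ k := by exact_mod_cast hk
  have hmain : ∀ t η : ℝ, 0 < t → 0 < η → η ≤ ρ →
      wmod 1 g t a b ≤ C * A * ω η * (1 + t * ρ ^ (k - 1) / η ^ k) := by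
    intro t η ht hη hηρ
    have hωη := hωpos η hη
    have hωlarge : ∀ s, η ≤ s → ω s ≤ ω η * (s ^ k / η ^ k) := fun s hs => by
      have hs0 : 0 < s := hη.trans_le hs
      have := hωdiv η s hη hs
      rw [div_le_iff₀ (by positivity)] at this
      exact this.trans_eq (by ring)
    have hN : ∀ x ∈ Icc a b, |g x| ≤ A * (ω η * (ρ ^ k / η ^ k)) := fun x hx =>
      (hg x hx).trans (mul_le_mul_of_nonneg_left (hωlarge ρ hηρ) hA)
    refine wmod_le (by positivity) fun h x hh hht hax hxb => ?_
    refine (hmarchaud a b ρ (A * ω η) _ g hρ hρab hab (by positivity) (by positivity) hN ?_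
      h x hh hax hxb).trans ?_
    · intro h x hh hax hxb
      refine (abs_fwdDiff_iterate_le_wmod hN hh hax hxb).trans
        ((hsmooth h hh (by nlinarith)).trans ?_)
      have hscale : A * (ω η * (ρ ^ k / η ^ k)) * (h / ρ) ^ k = A * (ω η * (h ^ k / η ^ k)) := by
        rw [div_pow]
        field_simp
      rw [hscale, ← mul_add]
      refine mul_le_mul_of_nonneg_left ?_ hA
      rcases le_total h η with hle | hge
      · exact (hωmono h η hh hle).trans (le_add_of_nonneg_right (by positivity))
      · exact (hωlarge h hge).trans (le_add_of_nonneg_left hωη.le)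
    · have hscale : C * (A * ω η + A * (ω η * (ρ ^ k / η ^ k)) * (h / ρ) ^ 1)
          = C * A * ω η * (1 + h * ρ ^ (k - 1) / η ^ k) := by
        obtain ⟨n, rfl⟩ : ∃ n, k = n + 1 := ⟨k - 1, by omega⟩
        rw [Nat.add_sub_cancel, pow_succ ρ]
        field_simp
      rw [hscale]
      gcongr
  constructor
  · intro t η ht htη hηρ
    have hη : 0 < η := ht.trans_le htη
    have hωη := hωpos η hη
    refine (hmain t η ht hη hηρ).trans ?_
    gcongr
    linarith
  · intro t ht htρ
    set η := t ^ ((1 : ℝ) / k) * ρ ^ (1 - (1 : ℝ) / k) with hηdef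
    have hη : 0 < η := by positivity
    have hηρ : η ≤ ρ := calc
      η ≤ ρ ^ ((1 : ℝ) / k) * ρ ^ (1 - (1 : ℝ) / k) := by
        rw [hηdef]
        gcongr
      _ = ρ := by
        rw [← Real.rpow_add hρ, add_sub_cancel, Real.rpow_one]
    have hηk : η ^ k = t * ρ ^ (k - 1) := by
      rw [hηdef, mul_pow, ← Real.rpow_mul_natCast ht.le, ← Real.rpow_mul_natCast hρ.le,
        ← Real.rpow_natCast ρ (k - 1), Nat.cast_sub (by omega), one_div,
        inv_mul_cancel₀ (by positivity), Real.rpow_one, sub_mul,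
        inv_mul_cancel₀ (by positivity), one_mul, Nat.cast_one]
    refine (hmain t η ht hη hηρ).trans_eq ?_
    rw [← hηk, div_self (by positivity)]
    ring
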